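/- arXiv:2210.15114 — 5 statements merged into one kernel-verified Lean document; each statement's English description precedes it below -/
import Mathlib

section
/- Let p be a positive even integer, x_1,…,x_n ∈ ℝ^d, y ∈ ℝ^n, and let A be the n×n matrix with A_{k,j} = ‖x_k − x_j‖_p^p. Then for every k ∈ [n], (Ay)(k) = Σ_{i=1}^d Σ_{t=0}^p binom(p,t) x_k(i)^t · S_{i,t}, where S_{i,t} := Σ_{j=1}^n y_j (−1)^{p−t} x_j(i)^{p−t}. -/
/-- Matrix-vector product formula for the `ℓ_p^p` distance matrix, `p` even. -/
theorem lpp_even_matvec_formula (p n d : ℕ) (hp : 0 < p) (hpeven : Even p)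
    (x : Fin n → Fin d → ℝ) (y : Fin n → ℝ) (A : Fin n → Fin n → ℝ)
    (hA : ∀ k j, A k j = ∑ i, |x k i - x j i| ^ p) (k : Fin n) :
    ∑ j, y j * A k j =
      ∑ i, ∑ t ∈ Finset.range (p + 1),
        (p.choose t : ℝ) * x k i ^ t * ∑ j, y j * (-1 : ℝ) ^ (p - t) * x j i ^ (p - t) := by
  simp only [hA, hpeven.pow_abs, Finset.mul_sum]
  rw [Finset.sum_comm]
  refine Finset.sum_congr rfl fun i _ => ?_
  rw [Finset.sum_comm]
  refine Finset.sum_congr rfl fun j _ => ?_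
  rw [sub_eq_add_neg, add_pow, Finset.mul_sum]
  refine Finset.sum_congr rfl fun t _ => ?_
  rw [neg_pow (x j i)]
  ring
end

section
/- Define f, g : {0,1} → [0,1] by f(0) = g(0) = 1/2, f(1) = 0, g(1) = 1, and extend them coordinatewise to {0,1}^d. Then for any pair of non-zero vectors a, b ∈ {0,1}^d: ‖f(a) − g(b)‖_∞ = 1 if a·b > 0, and ‖f(a) − g(b)‖_∞ = 1/2 if a·b = 0, where a·b = Σ_{i=1}^d a(i) b(i) is the dot product over the reals. -/
/-- OVP reduction gadget: with `f(0) = g(0) = 1/2`, `f(1) = 0`, `g(1) = 1` applied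
coordinatewise, for non-zero binary vectors `a, b`, `‖f(a) − g(b)‖_∞ = 1` iff `a·b > 0`
and `‖f(a) − g(b)‖_∞ = 1/2` iff `a·b = 0`. -/
theorem ovp_gadget (d : ℕ) (a b : Fin d → ℝ)
    (ha01 : ∀ i, a i = 0 ∨ a i = 1) (hb01 : ∀ i, b i = 0 ∨ b i = 1)
    (ha : ∃ i, a i = 1) (hb : ∃ i, b i = 1)
    (f g : ℝ → ℝ) (hf0 : f 0 = 1 / 2) (hg0 : g 0 = 1 / 2) (hf1 : f 1 = 0) (hg1 : g 1 = 1) :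
    (0 < ∑ i, a i * b i → (⨆ i, |f (a i) - g (b i)|) = 1) ∧
      ((∑ i, a i * b i) = 0 → (⨆ i, |f (a i) - g (b i)|) = 1 / 2) := by
  obtain ⟨i₀, hi₀⟩ := ha
  haveI : Nonempty (Fin d) := ⟨i₀⟩
  have hbdd : BddAbove (Set.range fun i => |f (a i) - g (b i)|) :=
    (Set.finite_range _).bddAbove
  constructor
  · intro h
    obtain ⟨j, -, hj⟩ := Finset.exists_lt_of_sum_lt (s := Finset.univ)
      (f := fun _ : Fin d => (0 : ℝ)) (g := fun i => a i * b i) (by simpa using h)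
    apply le_antisymm
    · apply ciSup_le
      intro i
      rcases ha01 i with h1 | h1 <;> rcases hb01 i with h2 | h2 <;>
        rw [h1, h2] <;> simp only [hf0, hf1, hg0, hg1] <;> norm_num [abs_le]
    · refine le_trans ?_ (le_ciSup hbdd j)
      rcases ha01 j with h1 | h1 <;> rcases hb01 j with h2 | h2 <;>
        simp [h1, h2] at hj
      simp [h1, h2, hf1, hg1]
  · intro h
    have hz := (Finset.sum_eq_zero_iff_of_nonneg (fun i _ => by
      rcases ha01 i with h1 | h1 <;> rcases hb01 i with h2 | h2 <;> simp [h1, h2])).1 h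
    apply le_antisymm
    · apply ciSup_le
      intro i
      have hi := hz i (Finset.mem_univ i)
      rcases ha01 i with h1 | h1 <;> rcases hb01 i with h2 | h2 <;>
        rw [h1, h2] at hi ⊢ <;> simp only [hf0, hf1, hg0, hg1] <;>
        first
        | (exfalso; norm_num at hi; done)
        | norm_num [abs_le]
    · refine le_trans ?_ (le_ciSup hbdd i₀)
      have hi := hz i₀ (Finset.mem_univ i₀)
      have h2 : b i₀ = 0 := by simpa [hi₀] using hi
      simp only [hi₀, h2, hf1, hg0]
      norm_num [abs_of_pos]
end

section
/- Define f, g : {0,1} → [0,1] by f(0) = g(0) = 1/2, f(1) = 0, g(1) = 1, extended coordinatewise to {0,1}^d. Let a^1,…,a^n and b^1,…,b^n be non-zero vectors in {0,1}^d. Then Σ_{i=1}^n Σ_{j=1}^n ‖f(a^i) − g(b^j)‖_∞ < n² if and only if there exist i, j ∈ [n] with a^i · b^j = 0 (dot product over the reals). -/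
/-- Core of the OVP reduction: the total sum of the `ℓ∞` cross-distances of the gadget
point sets is below `n²` iff some pair of vectors is orthogonal. -/
theorem ovp_reduction (n d : ℕ) (a b : Fin n → Fin d → ℝ)
    (ha01 : ∀ i t, a i t = 0 ∨ a i t = 1) (hb01 : ∀ j t, b j t = 0 ∨ b j t = 1)
    (ha : ∀ i, ∃ t, a i t = 1) (hb : ∀ j, ∃ t, b j t = 1)
    (f g : ℝ → ℝ) (hf0 : f 0 = 1 / 2) (hg0 : g 0 = 1 / 2) (hf1 : f 1 = 0) (hg1 : g 1 = 1) :
    (∑ i, ∑ j, ⨆ t, |f (a i t) - g (b j t)|) < (n : ℝ) ^ 2 ↔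
      ∃ i j, (∑ t, a i t * b j t) = 0 := by
  have hle : ∀ i j t, |f (a i t) - g (b j t)| ≤ 1 := by
    intro i j t
    rcases ha01 i t with h | h <;> rcases hb01 j t with h' | h' <;>
      rw [h, h'] <;> simp only [hf0, hf1, hg0, hg1] <;> norm_num [abs_le]
  have hbdd : ∀ i j, BddAbove (Set.range fun t => |f (a i t) - g (b j t)|) := fun i j =>
    ⟨1, by rintro _ ⟨t, rfl⟩; exact hle i j t⟩
  have hsup : ∀ i j, (⨆ t, |f (a i t) - g (b j t)|) ≤ 1 := fun i j =>
    Real.iSup_le (hle i j) zero_le_one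
  have hone : (n : ℝ) ^ 2 = ∑ _i : Fin n, ∑ _j : Fin n, (1 : ℝ) := by
    simp [sq]
  rw [hone]
  constructor
  · intro hlt
    by_contra! hne
    refine absurd hlt (not_lt.mpr ?_)
    refine Finset.sum_le_sum fun i _ => Finset.sum_le_sum fun j _ => ?_
    obtain ⟨t, -, ht⟩ := Finset.exists_ne_zero_of_sum_ne_zero (hne i j)
    have h1 : a i t = 1 := (ha01 i t).resolve_left (left_ne_zero_of_mul ht)
    have h2 : b j t = 1 := (hb01 j t).resolve_left (right_ne_zero_of_mul ht)
    refine le_trans ?_ (le_ciSup (hbdd i j) t)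
    simp only [h1, h2, hf1, hg1]
    norm_num
  · rintro ⟨i, j, h0⟩
    have hz : ∀ t, a i t * b j t = 0 := by
      intro t
      refine (Finset.sum_eq_zero_iff_of_nonneg ?_).mp h0 t (Finset.mem_univ t)
      intro t _
      rcases ha01 i t with h | h <;> rcases hb01 j t with h' | h' <;> simp [h, h']
    have hhalf : (⨆ t, |f (a i t) - g (b j t)|) ≤ 1 / 2 := by
      refine Real.iSup_le (fun t => ?_) (by norm_num)
      have := hz t
      rcases ha01 i t with h | h <;> rcases hb01 j t with h' | h' <;>
        rw [h, h'] at this ⊢ <;> simp only [hf0, hf1, hg0, hg1] <;>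
        first
        | (norm_num at this; done)
        | norm_num [abs_le]
    refine Finset.sum_lt_sum (fun i _ => Finset.sum_le_sum fun j _ => hsup i j)
      ⟨i, Finset.mem_univ i, ?_⟩
    exact Finset.sum_lt_sum (fun j _ => hsup i j)
      ⟨j, Finset.mem_univ j, lt_of_le_of_lt hhalf (by norm_num)⟩
end

section
/- There exists a constant c > 0 such that for every real t ≥ 2 and every ε ∈ (0,1), there exists a real polynomial T of degree at most c·√t·log(t/ε) with |T(x)| ≤ ε/t for all x ∈ [0, 1/(10t)] and |T(x) − 1| ≤ ε/t² for all x ∈ [1/t, 1]. -/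
open Polynomial in
lemma aux_lower (s : ℝ) (hs : 0 ≤ s) (n : ℕ) :
    1 + (n : ℝ) ^ 2 * s ≤ (Chebyshev.T ℝ n).eval (1 + s) ∧
    (2 * n + 1) * s ≤ (Chebyshev.T ℝ (n + 1 : ℕ)).eval (1 + s) - (Chebyshev.T ℝ n).eval (1 + s) := by
  induction n with
  | zero => simp
  | succ n ih =>
    obtain ⟨h1, h2⟩ := ih
    have h3 : 1 + ((n + 1 : ℕ) : ℝ) ^ 2 * s ≤ (Chebyshev.T ℝ (n + 1 : ℕ)).eval (1 + s) := by
      push_cast at *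
      nlinarith
    refine ⟨h3, ?_⟩
    have h4 : (Chebyshev.T ℝ (n + 1 + 1 : ℕ)).eval (1 + s)
        = 2 * (1 + s) * (Chebyshev.T ℝ (n + 1 : ℕ)).eval (1 + s)
          - (Chebyshev.T ℝ n).eval (1 + s) := by
      have := Chebyshev.T_add_two ℝ (n : ℤ)
      have e : ((n + 1 + 1 : ℕ) : ℤ) = (n : ℤ) + 2 := by push_cast; ring
      rw [e, this]
      simp
    rw [h4]
    have h5 : 1 ≤ (Chebyshev.T ℝ (n + 1 : ℕ)).eval (1 + s) := by
      have : 0 ≤ ((n + 1 : ℕ) : ℝ) ^ 2 * s := by positivity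
      linarith
    have h6 := mul_le_mul_of_nonneg_left h5 hs
    push_cast at *
    linarith

open Polynomial in
lemma aux_ratio (s : ℝ) (hs : 0 < s) (n : ℕ) (hn : (n : ℝ) ^ 2 * s ≤ 4) (z : ℝ)
    (hz1 : 1 + 1.8 * s ≤ z) (hz2 : z ≤ 1 + 2 * s) :
    0 < (Chebyshev.T ℝ n).eval z ∧
    (Chebyshev.T ℝ n).eval z ≤ (Chebyshev.T ℝ n).eval (1 + 2 * s) ∧
    5 / 9 * (Chebyshev.T ℝ n).eval (1 + 2 * s) ^ 2 ≤ (Chebyshev.T ℝ n).eval z ^ 2 := by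
  have hz : 1 ≤ z := by linarith
  have hw : 1 ≤ 1 + 2 * s := by linarith
  have hθ := Real.arcosh_nonneg hz
  have hle : Real.arcosh z ≤ Real.arcosh (1 + 2 * s) :=
    (Real.arcosh_le_arcosh (by linarith) (by linarith)).2 hz2
  have cz := Real.cosh_arcosh hz
  have cw := Real.cosh_arcosh hw
  set θ := Real.arcosh z
  obtain ⟨d, hd, hd2⟩ : ∃ d, 0 ≤ d ∧ Real.arcosh (1 + 2 * s) = θ + d :=
    ⟨Real.arcosh (1 + 2 * s) - θ, by linarith, by ring⟩
  rw [hd2] at cw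
  have ep : (Chebyshev.T ℝ n).eval z = Real.cosh (n * θ) := by
    rw [← cz, Chebyshev.T_real_cosh]; simp
  have eu : (Chebyshev.T ℝ n).eval (1 + 2 * s) = Real.cosh (n * θ + n * d) := by
    rw [← cw, Chebyshev.T_real_cosh]; simp [mul_add]
  rw [ep, eu]
  have hn0 : (0 : ℝ) ≤ n := Nat.cast_nonneg n
  have hnθ : 0 ≤ n * θ := by positivity
  have hnd : 0 ≤ n * d := by positivity
  have hp := Real.cosh_pos (n * θ)
  have hsn : 0 ≤ Real.sinh θ := Real.sinh_nonneg_iff.2 hθ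
  have hds : d * Real.sinh θ ≤ 0.2 * s := by
    rw [Real.cosh_add, cz] at cw
    have h1 := Real.one_le_cosh d
    have h2 := Real.self_le_sinh_iff.2 hd
    nlinarith [mul_le_mul_of_nonneg_left h2 hsn, mul_le_mul_of_nonneg_left h1 (by linarith : 0 ≤ z)]
  have hs2 : 3.6 * s ≤ Real.sinh θ ^ 2 := by
    have := Real.cosh_sq θ
    rw [cz] at this
    nlinarith
  have hd3 : d ^ 2 * 90 ≤ s := by
    have h1 : (d * Real.sinh θ) ^ 2 ≤ (0.2 * s) ^ 2 := by gcongr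
    have h2 : d ^ 2 * (3.6 * s) ≤ d ^ 2 * Real.sinh θ ^ 2 := by gcongr
    have h3 : (d ^ 2 * 90) * s ≤ s * s := by nlinarith
    exact le_of_mul_le_mul_right h3 hs
  have hnd2 : (n * d) ^ 2 ≤ 4 / 90 := by
    have : (n : ℝ) ^ 2 * (d ^ 2 * 90) ≤ (n : ℝ) ^ 2 * s := by gcongr
    nlinarith
  have hnd3 : n * d ≤ 0.22 := by
    by_contra! h
    nlinarith
  have hup : Real.cosh (n * θ + n * d) ≤ Real.cosh (n * θ) * Real.exp (n * d) := by
    rw [Real.cosh_add, ← Real.cosh_add_sinh (n * d), mul_add]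
    have := Real.sinh_lt_cosh (n * θ)
    have h2 : 0 ≤ Real.sinh (n * d) := Real.sinh_nonneg_iff.2 hnd
    nlinarith
  have hlow : 0.78 * Real.cosh (n * θ + n * d) ≤ Real.cosh (n * θ) := by
    have h1 := Real.add_one_le_exp (-(n * d))
    have h2 : Real.exp (-(n * d)) * Real.exp (n * d) = 1 := by rw [← Real.exp_add]; simp
    have h3 := Real.cosh_pos (n * θ + n * d)
    have h4 := mul_le_mul_of_nonneg_left hup (Real.exp_pos (-(n * d))).le
    have h5 : Real.exp (-(n * d)) * (Real.cosh (n * θ) * Real.exp (n * d)) = Real.cosh (n * θ) := by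
      rw [mul_left_comm, h2, mul_one]
    rw [h5] at h4
    refine le_trans ?_ h4
    gcongr
    linarith
  refine ⟨hp, ?_, ?_⟩
  · rw [Real.cosh_le_cosh, abs_of_nonneg hnθ, abs_of_nonneg (by positivity)]
    linarith
  · have h3 := Real.cosh_pos (n * θ + n * d)
    nlinarith

lemma aux_term (j k : ℕ) (a b : ℝ) (ha : 0 ≤ a) (hb : 0 ≤ b) (hab : b ≤ a) (hk : k ≤ j) :
    a ^ k * b ^ (2 * j - k) ≤ (a * b) ^ j := by
  obtain ⟨i, rfl⟩ := Nat.exists_eq_add_of_le hk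
  have : 2 * (k + i) - k = k + i + i := by omega
  rw [this, mul_pow, pow_add b (k + i) i, pow_add a k i]
  have h : b ^ i ≤ a ^ i := by gcongr
  have : 0 ≤ a ^ k * b ^ (k + i) := by positivity
  nlinarith [mul_le_mul_of_nonneg_left h this]

lemma aux_sum (j : ℕ) (S : Finset ℕ) (hS : S ⊆ Finset.range (2 * j + 1)) (f : ℕ → ℝ) (M : ℝ)
    (hM : 0 ≤ M) (h : ∀ k ∈ S, f k ≤ M) :
    ∑ k ∈ S, f k * ((2 * j).choose k : ℝ) ≤ 4 ^ j * M := by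
  calc ∑ k ∈ S, f k * ((2 * j).choose k : ℝ) ≤ ∑ k ∈ S, M * ((2 * j).choose k : ℝ) := by
        refine Finset.sum_le_sum fun k hk => ?_
        gcongr
        exact h k hk
    _ ≤ ∑ k ∈ Finset.range (2 * j + 1), M * ((2 * j).choose k : ℝ) :=
        Finset.sum_le_sum_of_subset_of_nonneg hS fun _ _ _ => by positivity
    _ = 4 ^ j * M := by
        rw [← Finset.mul_sum, ← Nat.cast_sum, Nat.sum_range_choose, pow_mul]
        push_cast
        norm_num [mul_comm]

open Polynomial in
lemma aux_amp (j : ℕ) : ∃ A : Polynomial ℝ, A.natDegree ≤ 2 * j ∧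
    (∀ y : ℝ, 5 / 9 ≤ y → y ≤ 1 → |A.eval y| ≤ (80 / 81) ^ j) ∧
    (∀ y : ℝ, 0 ≤ y → y ≤ 4 / 9 → |A.eval y - 1| ≤ (80 / 81) ^ j) := by
  have hev : ∀ y : ℝ, (∑ k ∈ Finset.range j, X ^ k * (1 - X) ^ (2 * j - k) *
      C (((2 * j).choose k : ℕ) : ℝ)).eval y =
      ∑ k ∈ Finset.range j, y ^ k * (1 - y) ^ (2 * j - k) * (((2 * j).choose k : ℕ) : ℝ) := by
    intro y; simp [eval_finsetSum]
  refine ⟨∑ k ∈ Finset.range j, X ^ k * (1 - X) ^ (2 * j - k) *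
      C (((2 * j).choose k : ℕ) : ℝ), ?_, ?_, ?_⟩
  · refine natDegree_sum_le_of_forall_le _ _ fun k hk => ?_
    rw [Finset.mem_range] at hk
    have h1 : (1 - X : ℝ[X]).natDegree ≤ 1 := by compute_degree
    refine (natDegree_mul_C_le _ _).trans (natDegree_mul_le.trans ?_)
    have h2 := natDegree_pow_le_of_le (2 * j - k) h1
    have h3 := natDegree_X_pow_le (R := ℝ) k
    omega
  · intro y h1 h2
    have hy : 0 ≤ 1 - y := by linarith
    rw [hev, abs_of_nonneg (Finset.sum_nonneg fun k _ => by positivity)]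
    refine (aux_sum j _ (by intro k; simp; omega) _ ((y * (1 - y)) ^ j) (by positivity) ?_).trans ?_
    · intro k hk
      rw [Finset.mem_range] at hk
      exact aux_term j k y (1 - y) (by linarith) hy (by linarith) hk.le
    · rw [← mul_pow]
      gcongr
      nlinarith
  · intro y h1 h2
    have hy : 0 ≤ 1 - y := by linarith
    have htot : ∑ k ∈ Finset.range (2 * j + 1),
        y ^ k * (1 - y) ^ (2 * j - k) * (((2 * j).choose k : ℕ) : ℝ) = 1 := by
      rw [← add_pow]; simp
    rw [← Finset.sum_range_add_sum_Ico _ (by omega : j ≤ 2 * j + 1)] at htot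
    rw [hev, abs_sub_comm, ← eq_sub_iff_add_eq'.2 htot,
      abs_of_nonneg (Finset.sum_nonneg fun k _ => by positivity)]
    refine (aux_sum j _ (by intro k; simp) _ ((y * (1 - y)) ^ j) (by positivity) ?_).trans ?_
    · intro k hk
      rw [Finset.mem_Ico] at hk
      have := aux_term j (2 * j - k) (1 - y) y hy h1 (by linarith) (by omega)
      rw [show 2 * j - (2 * j - k) = k by omega] at this
      rw [mul_comm y (1 - y), mul_comm (y ^ k)]
      exact this
    · rw [← mul_pow]
      gcongr
      nlinarith

/-- Chebyshev-type approximation: a polynomial of degree `O(√t · log(t/ε))` that is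
`(ε/t)`-small on `[0, 1/(10t)]` and `(ε/t²)`-close to `1` on `[1/t, 1]`. -/
theorem chebyshev_two_sided_threshold_poly :
    ∃ c : ℝ, 0 < c ∧ ∀ t : ℝ, 2 ≤ t → ∀ ε : ℝ, ε ∈ Set.Ioo (0 : ℝ) 1 →
      ∃ T : Polynomial ℝ,
        (T.natDegree : ℝ) ≤ c * Real.sqrt t * Real.log (t / ε) ∧
        (∀ x ∈ Set.Icc (0 : ℝ) (1 / (10 * t)), |T.eval x| ≤ ε / t) ∧
        ∀ x ∈ Set.Icc (1 / t) 1, |T.eval x - 1| ≤ ε / t ^ 2 := by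
  refine ⟨2000, by norm_num, fun t ht ε hε => ?_⟩
  obtain ⟨hε0, hε1⟩ := hε
  have ht0 : 0 < t := by linarith
  set r := Real.sqrt t with hr
  have hr2 : r ^ 2 = t := Real.sq_sqrt ht0.le
  have hr0 : 0 ≤ r := Real.sqrt_nonneg t
  have hr1 : 1 ≤ r := by nlinarith
  set L := Real.log (t / ε) with hL
  have hte : 2 ≤ t / ε := by
    rw [le_div_iff₀ hε0]; nlinarith
  have hL0 : 1 / 2 ≤ L := by
    have := Real.log_le_log (by norm_num) hte
    have := Real.log_two_gt_d9
    linarith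
  -- the parameters
  obtain ⟨n, hn1, hn2⟩ : ∃ n : ℕ, r ≤ n ∧ (n : ℝ) ≤ 2 * r :=
    ⟨⌈r⌉₊, Nat.le_ceil r, by have := Nat.ceil_lt_add_one hr0; linarith⟩
  obtain ⟨j, hj1, hj2⟩ : ∃ j : ℕ, 162 * L ≤ j ∧ (j : ℝ) ≤ 164 * L :=
    ⟨⌈162 * L⌉₊, Nat.le_ceil _, by
      have := Nat.ceil_lt_add_one (show 0 ≤ 162 * L by linarith); linarith⟩
  have herr : ((80 : ℝ) / 81) ^ j ≤ (ε / t) ^ 2 := by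
    have h1 : (80 : ℝ) / 81 ≤ Real.exp (-(1 / 81)) := by
      have := Real.add_one_le_exp (-(1 / 81 : ℝ)); linarith
    calc ((80 : ℝ) / 81) ^ j ≤ Real.exp (-(1 / 81)) ^ j := by gcongr
      _ = Real.exp (j * (-(1 / 81))) := by rw [Real.exp_nat_mul]
      _ ≤ Real.exp (-L + -L) := by
          apply Real.exp_le_exp.2; linarith
      _ = (ε / t) ^ 2 := by
          rw [Real.exp_add, Real.exp_neg, hL, Real.exp_log (by positivity), inv_div, sq]
  have hx1 : (ε / t) ^ 2 ≤ ε / t ^ 2 := by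
    rw [div_pow]; gcongr; nlinarith
  have hx2 : (ε / t) ^ 2 ≤ ε / t := by
    have h1 : ε / t ≤ 1 := by rw [div_le_one ht0]; linarith
    have h2 : 0 ≤ ε / t := by positivity
    nlinarith
  obtain ⟨A, hA, hA0, hA1⟩ := aux_amp j
  set s := 1 / t with hs
  have hs0 : 0 < s := by positivity
  have hst : s * t = 1 := by rw [hs]; field_simp
  set u := (Polynomial.Chebyshev.T ℝ n).eval (1 + 2 * s) with hu
  have hu3 : 3 ≤ u := by
    have h := (aux_lower (2 * s) (by positivity) n).1
    have : t ≤ (n : ℝ) ^ 2 := by rw [← hr2]; gcongr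
    nlinarith
  have hns : (n : ℝ) ^ 2 * s ≤ 4 := by
    have : (n : ℝ) ^ 2 ≤ (2 * r) ^ 2 := by gcongr
    nlinarith
  set ℓ : Polynomial ℝ := Polynomial.C (1 + 2 * s) - Polynomial.C 2 * Polynomial.X with hℓ
  set q : Polynomial ℝ :=
    Polynomial.C (1 / u ^ 2) * ((Polynomial.Chebyshev.T ℝ n).comp ℓ) ^ 2 with hq
  have hqe : ∀ x, q.eval x =
      (Polynomial.Chebyshev.T ℝ n).eval (1 + 2 * s - 2 * x) ^ 2 / u ^ 2 := by
    intro x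
    simp [hq, hℓ]
    ring
  have hqd : q.natDegree ≤ 2 * n := by
    have h1 : ℓ.natDegree ≤ 1 := by rw [hℓ]; compute_degree
    have h2 : ((Polynomial.Chebyshev.T ℝ n).comp ℓ).natDegree ≤ n := by
      refine Polynomial.natDegree_comp_le.trans ?_
      rw [Polynomial.Chebyshev.natDegree_T]
      simpa using Nat.mul_le_mul_left n h1
    exact (Polynomial.natDegree_C_mul_le _ _).trans (Polynomial.natDegree_pow_le_of_le 2 h2)
  have hu2 : 0 < u ^ 2 := by positivity
  refine ⟨A.comp q, ?_, ?_, ?_⟩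
  · have h1 : (A.comp q).natDegree ≤ 2 * j * (2 * n) :=
      Polynomial.natDegree_comp_le.trans (Nat.mul_le_mul hA hqd)
    have h2 : ((A.comp q).natDegree : ℝ) ≤ 2 * j * (2 * n) := by exact_mod_cast h1
    have h3 : (j : ℝ) * n ≤ (164 * L) * (2 * r) := by gcongr
    have h4 : 0 ≤ r * L := by positivity
    nlinarith
  · rintro x ⟨h0, h1⟩
    have h1' : x ≤ 0.1 * s := by
      have : 1 / (10 * t) = 0.1 * s := by rw [hs]; field_simp; norm_num
      linarith
    obtain ⟨g0, g1, g2⟩ := aux_ratio s hs0 n hns (1 + 2 * s - 2 * x) (by linarith) (by linarith)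
    rw [Polynomial.eval_comp]
    refine ((hA0 _ ?_ ?_).trans herr).trans hx2
    · rw [hqe, le_div_iff₀ hu2]; exact g2
    · rw [hqe, div_le_one hu2]; gcongr
  · rintro x ⟨h0, h1⟩
    rw [Polynomial.eval_comp]
    refine ((hA1 _ ?_ ?_).trans herr).trans hx1
    · rw [hqe]; positivity
    · have h := Polynomial.Chebyshev.abs_eval_T_real_le_one n (x := 1 + 2 * s - 2 * x)
        (by rw [abs_le]; constructor <;> linarith)
      rw [hqe, div_le_iff₀ hu2]
      have := (sq_le_one_iff_abs_le_one _).2 h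
      nlinarith
end

section
/- Let d ≥ 2 and i ≥ 1 be integers and let p be a real number with p ≥ 2·i·ln d. Then d·i^p ≤ (i+1)^p. Consequently, for any integer M ≥ i and any x, y ∈ {0, 1, …, M}^d: if ‖x − y‖_∞ ≤ i then Σ_{j=1}^d |x(j) − y(j)|^p ≤ d·i^p, while if ‖x − y‖_∞ ≥ i + 1 then Σ_{j=1}^d |x(j) − y(j)|^p ≥ (i+1)^p ≥ d·i^p. -/
/-- Threshold separation for the fast `ℓ∞` distance-matrix construction over a bounded
alphabet: if `p ≥ 2i·ln d` then `d·i^p ≤ (i+1)^p`, and the `ℓ_p^p` value separates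
`‖x − y‖_∞ ≤ i` from `‖x − y‖_∞ ≥ i + 1`. -/
theorem linf_threshold_separation (d i : ℕ) (hd : 2 ≤ d) (hi : 1 ≤ i) (p : ℝ)
    (hp : 2 * i * Real.log d ≤ p) :
    (d : ℝ) * (i : ℝ) ^ p ≤ ((i : ℝ) + 1) ^ p ∧
      ∀ M : ℕ, i ≤ M → ∀ x y : Fin d → ℕ, (∀ j, x j ≤ M) → (∀ j, y j ≤ M) →
        ((⨆ j, |(x j : ℝ) - (y j : ℝ)|) ≤ (i : ℝ) →
          (∑ j, |(x j : ℝ) - (y j : ℝ)| ^ p) ≤ (d : ℝ) * (i : ℝ) ^ p) ∧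
        ((i : ℝ) + 1 ≤ (⨆ j, |(x j : ℝ) - (y j : ℝ)|) →
          ((i : ℝ) + 1) ^ p ≤ (∑ j, |(x j : ℝ) - (y j : ℝ)| ^ p) ∧
            (d : ℝ) * (i : ℝ) ^ p ≤ ((i : ℝ) + 1) ^ p) := by
  have hi' : (1 : ℝ) ≤ i := by exact_mod_cast hi
  have hi0 : (0 : ℝ) < i := by linarith
  have hd' : (2 : ℝ) ≤ d := by exact_mod_cast hd
  have hd0 : (0 : ℝ) < d := by linarith
  have hld : 0 ≤ Real.log d := Real.log_nonneg (by linarith)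
  have hp0 : 0 ≤ p := le_trans (by positivity) hp
  have hlog : 1 / (2 * (i : ℝ)) ≤ Real.log ((i : ℝ) + 1) - Real.log i := by
    rw [← Real.log_div (by positivity) (by positivity)]
    refine le_trans ?_ (Real.one_sub_inv_le_log_of_pos (by positivity))
    have h1 : 1 - (((i : ℝ) + 1) / i)⁻¹ = 1 / ((i : ℝ) + 1) := by
      field_simp
      ring
    rw [h1]
    exact one_div_le_one_div_of_le (by positivity) (by linarith)
  have hmain : (d : ℝ) * (i : ℝ) ^ p ≤ ((i : ℝ) + 1) ^ p := by
    have h2 : Real.log d ≤ p * (Real.log ((i : ℝ) + 1) - Real.log i) := by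
      calc Real.log d = (2 * i * Real.log d) * (1 / (2 * (i : ℝ))) := by field_simp
        _ ≤ p * (1 / (2 * (i : ℝ))) := mul_le_mul_of_nonneg_right hp (by positivity)
        _ ≤ _ := mul_le_mul_of_nonneg_left hlog hp0
    rw [Real.rpow_def_of_pos hi0, Real.rpow_def_of_pos (by positivity : (0 : ℝ) < (i : ℝ) + 1)]
    nth_rewrite 1 [← Real.exp_log hd0]
    rw [← Real.exp_add]
    apply Real.exp_le_exp.mpr
    linarith
  refine ⟨hmain, fun M _ x y _ _ => ⟨fun h => ?_, fun h => ⟨?_, hmain⟩⟩⟩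
  · have hj : ∀ j, |(x j : ℝ) - (y j : ℝ)| ≤ i := fun j =>
      le_trans (le_ciSup (f := fun j => |(x j : ℝ) - (y j : ℝ)|)
        (Set.finite_range _).bddAbove j) h
    calc (∑ j, |(x j : ℝ) - (y j : ℝ)| ^ p) ≤ ∑ _j : Fin d, (i : ℝ) ^ p :=
          Finset.sum_le_sum fun j _ => Real.rpow_le_rpow (abs_nonneg _) (hj j) hp0
      _ = _ := by simp
  · have : Nonempty (Fin d) := ⟨⟨0, by omega⟩⟩
    obtain ⟨j, hj⟩ := exists_eq_ciSup_of_finite (f := fun j => |(x j : ℝ) - (y j : ℝ)|)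
    rw [← hj] at h
    refine le_trans (Real.rpow_le_rpow (by positivity) h hp0) ?_
    exact Finset.single_le_sum (f := fun j => |(x j : ℝ) - (y j : ℝ)| ^ p)
      (fun k _ => Real.rpow_nonneg (abs_nonneg _) p) (Finset.mem_univ j)
end
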